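/- arXiv:2403.05938 — 10 statements merged into one kernel-verified Lean document; each statement's English description precedes it below -/
import Mathlib

section
/- Let α, β, γ be real numbers with α > π/3, 0 < γ < β and β + γ > π. If a, b, c are natural numbers satisfying a·α + b·β + c·γ = 2π, a + b + c ≥ 3, b + c even, and b ≥ 2, then b = 2, c = 0 and a = 1 or a = 2. -/
open Real

theorem stmt0 (α β γ : ℝ) (hα : α > π / 3) (hγ : 0 < γ) (hγβ : γ < β)
    (hβγ : β + γ > π) (a b c : ℕ)
    (hsum : a * α + b * β + c * γ = 2 * π)
    (hdeg : a + b + c ≥ 3) (hpar : Even (b + c)) (hb : b ≥ 2) :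
    b = 2 ∧ c = 0 ∧ (a = 1 ∨ a = 2) := by
  have hπ := Real.pi_pos
  have hα0 : 0 < α := by linarith
  have hβ0 : 0 < β := by linarith
  have key : ∀ x y z : ℕ, x ≤ a → y ≤ b → z ≤ c →
      (x : ℝ) * α + y * β + z * γ ≤ 2 * π := by
    intro x y z hx hy hz
    rw [← hsum]
    gcongr
  have hb4 : ¬ 4 ≤ b := by
    intro h
    have := key 0 4 0 (by omega) h (by omega)
    norm_num at this
    linarith
  have hb3 : ¬ (3 ≤ b ∧ 1 ≤ c) := by
    rintro ⟨h, h'⟩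
    have := key 0 3 1 (by omega) h h'
    norm_num at this
    linarith
  have hc2 : ¬ 2 ≤ c := by
    intro h
    have := key 0 2 2 (by omega) hb h
    norm_num at this
    linarith
  have ha3 : ¬ 3 ≤ a := by
    intro h
    have := key 3 2 0 h hb (by omega)
    norm_num at this
    linarith
  obtain ⟨k, hk⟩ := hpar
  omega
end

section
/- Let α, β, γ be real numbers with α > π/2, 0 < γ < β and β + γ > π. If a, b, c are natural numbers satisfying a·α + b·β + c·γ = 2π, a + b + c ≥ 3, b + c even, and b ≥ 2, then a = 1, b = 2 and c = 0. -/
open Real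

theorem stmt1 (α β γ : ℝ) (hα : α > π / 2) (hγ : 0 < γ) (hγβ : γ < β)
    (hβγ : β + γ > π) (a b c : ℕ)
    (hsum : a * α + b * β + c * γ = 2 * π)
    (hdeg : a + b + c ≥ 3) (hpar : Even (b + c)) (hb : b ≥ 2) :
    a = 1 ∧ b = 2 ∧ c = 0 := by
  have hπ := Real.pi_pos
  have hα0 : 0 ≤ α := by linarith
  have hβ0 : 0 ≤ β := by linarith
  have key : ∀ x y z : ℕ, x ≤ a → y ≤ b → z ≤ c →
      (x : ℝ) * α + y * β + z * γ ≤ 2 * π := by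
    intro x y z hx hy hz
    rw [← hsum]
    gcongr
  have h1 : ¬ 4 ≤ b := fun h => by
    have := key 0 4 0 (by omega) h (by omega)
    norm_num at this
    linarith
  have h2 : ¬ (3 ≤ b ∧ 1 ≤ c) := fun h => by
    have := key 0 3 1 (by omega) h.1 h.2
    norm_num at this
    linarith
  have h3 : ¬ 2 ≤ c := fun h => by
    have := key 0 2 2 (by omega) hb h
    norm_num at this
    linarith
  have h4 : ¬ 2 ≤ a := fun h => by
    have := key 2 2 0 h hb (by omega)
    norm_num at this
    linarith
  obtain ⟨k, hk⟩ := hpar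
  omega
end

section
/- Let α, β, γ be real numbers with α > π/2, 0 < γ < β and β + γ > π. If a, b, c are natural numbers satisfying a·α + b·β + c·γ = 2π, a + b + c ≥ 3, b + c even, b ≥ 1, c ≥ 1, and c ≤ 2a + 1, then (a, b, c) = (1, 1, 1) or (a, b, c) = (1, 1, 3). -/
open Real

theorem stmt2 (α β γ : ℝ) (hα : α > π / 2) (hγ : 0 < γ) (hγβ : γ < β)
    (hβγ : β + γ > π) (a b c : ℕ)
    (hsum : a * α + b * β + c * γ = 2 * π)
    (hdeg : a + b + c ≥ 3) (hpar : Even (b + c)) (hb : b ≥ 1) (hc : c ≥ 1)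
    (hcle : c ≤ 2 * a + 1) :
    (a, b, c) = (1, 1, 1) ∨ (a, b, c) = (1, 1, 3) := by
  have hπ := Real.pi_pos
  have hab : a + b ≤ 2 := by
    by_contra! h
    have h3 : (3 : ℝ) ≤ a + b := by exact_mod_cast h
    have hb' : (1 : ℝ) ≤ b := by exact_mod_cast hb
    have hc' : (1 : ℝ) ≤ c := by exact_mod_cast hc
    have ha' : (0 : ℝ) ≤ a := Nat.cast_nonneg a
    have h1 : (a : ℝ) * (π / 2) ≤ a * α := mul_le_mul_of_nonneg_left hα.le ha'
    have h2 : ((b : ℝ) - 1) * (π / 2) ≤ (b - 1) * β :=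
      mul_le_mul_of_nonneg_left (by linarith) (by linarith)
    have h4 : 0 ≤ ((c : ℝ) - 1) * γ := mul_nonneg (by linarith) hγ.le
    have h5 : (2 : ℝ) * (π / 2) ≤ (a + b - 1) * (π / 2) :=
      mul_le_mul_of_nonneg_right (by linarith) (by linarith)
    linarith
  obtain ⟨k, hk⟩ := hpar
  simp only [Prod.mk.injEq]
  omega
end

section
/- Let α, β, γ be real numbers with α > π/3, 0 < γ < β and β + γ > π. If a, b, c are natural numbers satisfying a·α + b·β + c·γ = 2π, a + b + c ≥ 3, b + c even, b ≥ 1, c ≥ 1, and c ≤ 2a + 1, then (a, b, c) is one of (1,1,1), (2,1,1), (1,1,3), (2,1,3), (2,1,5). -/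
open Real

theorem stmt3 (α β γ : ℝ) (hα : α > π / 3) (hγ : 0 < γ) (hγβ : γ < β)
    (hβγ : β + γ > π) (a b c : ℕ)
    (hsum : a * α + b * β + c * γ = 2 * π)
    (hdeg : a + b + c ≥ 3) (hpar : Even (b + c)) (hb : b ≥ 1) (hc : c ≥ 1)
    (hcle : c ≤ 2 * a + 1) :
    (a, b, c) = (1, 1, 1) ∨ (a, b, c) = (2, 1, 1) ∨ (a, b, c) = (1, 1, 3) ∨
      (a, b, c) = (2, 1, 3) ∨ (a, b, c) = (2, 1, 5) := by
  have hπ : 0 < π := Real.pi_pos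
  have hα0 : 0 < α := by linarith
  have hβ0 : 0 < β := by linarith
  have haα : 0 ≤ (a : ℝ) * α := by positivity
  obtain ⟨k, hk⟩ := hpar
  have hb1 : b = 1 := by
    by_contra hne
    by_cases hc2 : 2 ≤ c
    · have h1 : (2 : ℝ) ≤ b := by exact_mod_cast (by omega : 2 ≤ b)
      have h2 : (2 : ℝ) ≤ c := by exact_mod_cast hc2
      have h3 := mul_le_mul_of_nonneg_right h1 hβ0.le
      have h4 := mul_le_mul_of_nonneg_right h2 hγ.le
      linarith
    · have h1 : (3 : ℝ) ≤ b := by exact_mod_cast (by omega : 3 ≤ b)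
      have h2 : (1 : ℝ) ≤ c := by exact_mod_cast hc
      have h3 := mul_le_mul_of_nonneg_right h1 hβ0.le
      have h4 := mul_le_mul_of_nonneg_right h2 hγ.le
      linarith
  subst hb1
  have ha : a ≤ 2 := by
    by_contra hne
    have h1 : (3 : ℝ) ≤ a := by exact_mod_cast (by omega : 3 ≤ a)
    have h2 : (1 : ℝ) ≤ c := by exact_mod_cast hc
    have h3 := mul_le_mul_of_nonneg_right h1 hα0.le
    have h4 := mul_le_mul_of_nonneg_right h2 hγ.le
    push_cast at hsum
    linarith
  simp only [Prod.mk.injEq, true_and]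
  interval_cases a <;> simp
  all_goals omega
end

section
/- Let α, β, γ be real numbers with α > π/3, 0 < γ < β, β + γ > π and α + 2β = 2π. If a, c are natural numbers with c ≥ 1, c odd, a + 1 + c ≥ 3, c ≤ 2a + 1 and a·α + β + c·γ = 2π, then (a, c) = (2, 1) or (a, c) = (1, 3). -/
open Real

theorem stmt6 (α β γ : ℝ) (hα : α > π / 3) (hγ : 0 < γ) (hγβ : γ < β)
    (hβγ : β + γ > π) (hv : α + 2 * β = 2 * π) (a c : ℕ)
    (hc : c ≥ 1) (hodd : Odd c) (hdeg : a + 1 + c ≥ 3) (hcle : c ≤ 2 * a + 1)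
    (hsum : a * α + β + c * γ = 2 * π) :
    (a, c) = (2, 1) ∨ (a, c) = (1, 3) := by
  obtain ⟨k, rfl⟩ := hodd
  have hg : γ > α / 2 := by linarith
  have hπ := Real.pi_pos
  have hak : a + k < 3 := by
    by_contra h
    have h3 : (3 : ℝ) ≤ a + k := by exact_mod_cast not_lt.mp h
    have hk : (0 : ℝ) ≤ k := Nat.cast_nonneg k
    push_cast at hsum
    have h1 : (k : ℝ) * (α / 2) ≤ k * γ := mul_le_mul_of_nonneg_left hg.le hk
    have h2 : 3 * α ≤ (a + k) * α := mul_le_mul_of_nonneg_right h3 (by linarith)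
    nlinarith
  have ha : a < 3 := by omega
  have hk : k < 3 := by omega
  interval_cases a <;> interval_cases k <;> first | omega | simp | skip
  exfalso
  norm_num at hsum
  linarith
end

section
/- Let α be a real number with 0 < α < 2π/3. Then 5·tan⁴(α/4) − 10·tan²(α/4) + 1 = 0 if and only if α = 2π/5. -/
open Real

theorem stmt13 (α : ℝ) (h1 : 0 < α) (h2 : α < 2 * π / 3) :
    5 * tan (α / 4) ^ 4 - 10 * tan (α / 4) ^ 2 + 1 = 0 ↔ α = 2 * π / 5 := by
  have hpi := Real.pi_pos
  have hx : 0 < cos (α / 4) := cos_pos_of_mem_Ioo ⟨by linarith, by linarith⟩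
  have hc : cos (α / 2) = 2 * cos (α / 4) ^ 2 - 1 := by
    rw [← cos_two_mul]; congr 1; ring
  have hq := quadratic_root_cos_pi_div_five
  have hT : tan (α / 4) ^ 2 * cos (α / 4) ^ 2 = 1 - cos (α / 4) ^ 2 := by
    rw [← mul_pow, tan_mul_cos hx.ne', sin_sq]
  have key : (5 * tan (α / 4) ^ 4 - 10 * tan (α / 4) ^ 2 + 1) * cos (α / 4) ^ 4
      = 4 * cos (α / 2) ^ 2 - 2 * cos (α / 2) - 1 := by
    rw [hc]
    linear_combination (5 * (tan (α / 4) ^ 2 * cos (α / 4) ^ 2 + 1 - cos (α / 4) ^ 2)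
      - 10 * cos (α / 4) ^ 2) * hT
  have hhalf : 1 / 2 < cos (α / 2) := by
    rw [← cos_pi_div_three]
    exact cos_lt_cos_of_nonneg_of_le_pi (by linarith) (by linarith) (by linarith)
  have hhalf' : 1 / 2 < cos (π / 5) := by
    rw [← cos_pi_div_three]
    exact cos_lt_cos_of_nonneg_of_le_pi (by linarith) (by linarith) (by linarith)
  constructor
  · intro h
    rw [h, zero_mul] at key
    have he : cos (α / 2) = cos (π / 5) := by
      have hm : (cos (α / 2) - cos (π / 5)) * (4 * (cos (α / 2) + cos (π / 5)) - 2) = 0 := by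
        linear_combination -key - hq
      rcases mul_eq_zero.mp hm with h | h <;> linarith
    have := injOn_cos ⟨by linarith, by linarith⟩ ⟨by linarith, by linarith⟩ he
    linarith
  · intro h
    have ha : α / 2 = π / 5 := by linarith
    rw [ha, hq] at key
    exact (mul_eq_zero.mp key).resolve_right (by positivity)
end

section
/- Let α be a real number with 0 < α < 2π/3, and set β = π − α/2 and γ = π − 3α/2. Then cos²(α/2)/sin²(α/2) + cos(2π/3)/sin²(α/2) = (cos(β/2)/sin(β/2))·(cos(γ/2)/sin(γ/2)) holds if and only if 5·tan⁴(α/4) − 10·tan²(α/4) + 1 = 0. -/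
open Real

theorem stmt14 (α : ℝ) (h1 : 0 < α) (h2 : α < 2 * π / 3)
    (β γ : ℝ) (hβ : β = π - α / 2) (hγ : γ = π - 3 * α / 2) :
    cos (α / 2) ^ 2 / sin (α / 2) ^ 2 + cos (2 * π / 3) / sin (α / 2) ^ 2 =
        (cos (β / 2) / sin (β / 2)) * (cos (γ / 2) / sin (γ / 2)) ↔
      5 * tan (α / 4) ^ 4 - 10 * tan (α / 4) ^ 2 + 1 = 0 := by
  have hs : 0 < sin (α / 4) := sin_pos_of_pos_of_lt_pi (by linarith) (by linarith)
  have hc : 0 < cos (α / 4) := cos_pos_of_mem_Ioo ⟨by linarith, by linarith⟩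
  have h3 : 0 < cos (3 * (α / 4)) := cos_pos_of_mem_Ioo ⟨by linarith, by linarith⟩
  have e1 : cos (2 * π / 3) = -(1 / 2) := by
    rw [show 2 * π / 3 = π - π / 3 by ring, cos_pi_sub, cos_pi_div_three]
  have hβ2 : β / 2 = π / 2 - α / 4 := by rw [hβ]; ring
  have hγ2 : γ / 2 = π / 2 - 3 * (α / 4) := by rw [hγ]; ring
  have hα2 : α / 2 = 2 * (α / 4) := by ring
  have hsc := sin_sq_add_cos_sq (α / 4)
  rw [e1, hβ2, hγ2, hα2, cos_pi_div_two_sub, sin_pi_div_two_sub, cos_pi_div_two_sub,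
    sin_pi_div_two_sub, tan_eq_sin_div_cos, sin_three_mul, sin_two_mul, cos_two_mul]
  rw [cos_three_mul] at h3 ⊢
  generalize sin (α / 4) = s at *
  generalize cos (α / 4) = c at *
  have hd : 0 < 4 * c ^ 2 - 3 := by
    by_contra h
    nlinarith
  have L : (2 * c ^ 2 - 1) ^ 2 / (2 * s * c) ^ 2 + -(1 / 2) / (2 * s * c) ^ 2
      - s / c * ((3 * s - 4 * s ^ 3) / (4 * c ^ 3 - 3 * c))
      = c ^ 2 / (8 * s ^ 2 * (4 * c ^ 2 - 3)) *
        (5 * (s / c) ^ 4 - 10 * (s / c) ^ 2 + 1) := by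
    have e : 4 * c ^ 3 - 3 * c = c * (4 * c ^ 2 - 3) := by ring
    have hd' := hd.ne'
    rw [e]
    obtain ⟨d, hdd⟩ : ∃ d, d = 4 * c ^ 2 - 3 := ⟨_, rfl⟩
    rw [← hdd] at hd' ⊢
    field_simp
    rw [hdd]
    have e4 : s ^ 4 = (1 - c ^ 2) ^ 2 := by rw [← hsc]; ring
    have e2 : s ^ 2 = 1 - c ^ 2 := by linarith
    ring_nf
    try simp only [show s ^ 6 = (s ^ 2) ^ 3 by ring, e4, e2]
    ring
  rw [← sub_eq_zero, L, mul_eq_zero, or_iff_right]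
  positivity
end

section
/- Let α be a real number with 0 < α < π, and set β = π − α/2 and γ = π − α. Then cos²(α/2)/sin²(α/2) + cos(2π/3)/sin²(α/2) = (cos(β/2)/sin(β/2))·(cos(γ/2)/sin(γ/2)) holds if and only if tan⁴(α/4) + 8·tan²(α/4) − 1 = 0. -/
open Real

theorem stmt15 (α : ℝ) (h1 : 0 < α) (h2 : α < π)
    (β γ : ℝ) (hβ : β = π - α / 2) (hγ : γ = π - α) :
    cos (α / 2) ^ 2 / sin (α / 2) ^ 2 + cos (2 * π / 3) / sin (α / 2) ^ 2 =
        (cos (β / 2) / sin (β / 2)) * (cos (γ / 2) / sin (γ / 2)) ↔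
      tan (α / 4) ^ 4 + 8 * tan (α / 4) ^ 2 - 1 = 0 := by
  have e1 : β / 2 = π / 2 - α / 4 := by rw [hβ]; ring
  have e2 : γ / 2 = π / 2 - α / 2 := by rw [hγ]; ring
  have e3 : cos (2 * π / 3) = -(1 / 2) := by
    rw [show 2 * π / 3 = π - π / 3 by ring, cos_pi_sub, cos_pi_div_three]
  have hs : 0 < sin (α / 4) := sin_pos_of_pos_of_lt_pi (by linarith) (by linarith)
  have hc : 0 < cos (α / 4) := cos_pos_of_mem_Ioo ⟨by linarith, by linarith⟩
  have hC : 0 < cos (α / 2) := cos_pos_of_mem_Ioo ⟨by linarith, by linarith⟩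
  have hS2 : sin (α / 2) = 2 * sin (α / 4) * cos (α / 4) := by
    rw [← sin_two_mul]; ring_nf
  have hC2 : cos (α / 2) = 2 * cos (α / 4) ^ 2 - 1 := by
    rw [← cos_two_mul]; ring_nf
  have hS : 0 < sin (α / 2) := by rw [hS2]; positivity
  have hp := sin_sq_add_cos_sq (α / 4)
  rw [e1, e2, e3, cos_pi_div_two_sub, sin_pi_div_two_sub, cos_pi_div_two_sub,
    sin_pi_div_two_sub, tan_eq_sin_div_cos, ← add_div, div_mul_div_comm,
    div_eq_div_iff (by positivity) (by positivity)]
  generalize cos (α / 2) = C at *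
  generalize sin (α / 2) = S at *
  generalize sin (α / 4) = s at *
  generalize cos (α / 4) = c at *
  have hs2 : s ^ 2 = (1 - C) / 2 := by linarith
  have hc2 : c ^ 2 = (1 + C) / 2 := by linarith
  have k1 : (C ^ 2 + -(1 / 2)) * (c * C) - s * S * S ^ 2 = c / 2 * (2 * C ^ 2 + C - 2) := by
    have : s * S * S ^ 2 = 8 * c * (s ^ 2) ^ 2 * c ^ 2 := by rw [hS2]; ring
    rw [this, hs2, hc2]; ring
  have k2 : (s / c) ^ 4 + 8 * (s / c) ^ 2 - 1 = -(2 * C ^ 2 + C - 2) / c ^ 4 := by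
    have : (s / c) ^ 4 + 8 * (s / c) ^ 2 - 1
        = ((s ^ 2) ^ 2 + 8 * s ^ 2 * c ^ 2 - (c ^ 2) ^ 2) / c ^ 4 := by
      field_simp
    rw [this, hs2, hc2]; ring
  rw [← sub_eq_zero, k1, k2, div_eq_zero_iff, mul_eq_zero, neg_eq_zero]
  have n1 : c / 2 ≠ 0 := by positivity
  have n2 : c ^ 4 ≠ 0 := by positivity
  tauto
end

section
/- Let α be a real number with 0 < α < π. Then tan⁴(α/4) + 8·tan²(α/4) − 1 = 0 if and only if α = 4·arctan(√(√17 − 4)). -/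
open Real

theorem stmt16 (α : ℝ) (h1 : 0 < α) (h2 : α < π) :
    tan (α / 4) ^ 4 + 8 * tan (α / 4) ^ 2 - 1 = 0 ↔
      α = 4 * Real.arctan (Real.sqrt (Real.sqrt 17 - 4)) := by
  have hs : Real.sqrt 17 ^ 2 = 17 := Real.sq_sqrt (by norm_num)
  have h4 : 4 ≤ Real.sqrt 17 := Real.le_sqrt_of_sq_le (by norm_num)
  have hq : Real.sqrt (Real.sqrt 17 - 4) ^ 2 = Real.sqrt 17 - 4 :=
    Real.sq_sqrt (by linarith)
  constructor
  · intro h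
    have ht : 0 < tan (α / 4) :=
      Real.tan_pos_of_pos_of_lt_pi_div_two (by linarith) (by linarith)
    have h5 : tan (α / 4) ^ 2 = Real.sqrt 17 - 4 := by
      have h6 : (tan (α / 4) ^ 2 - (Real.sqrt 17 - 4)) *
          (tan (α / 4) ^ 2 + 4 + Real.sqrt 17) = 0 := by
        linear_combination h - hs
      rcases mul_eq_zero.mp h6 with h7 | h7
      · linarith
      · have := sq_nonneg (tan (α / 4))
        linarith
    rw [← h5, Real.sqrt_sq ht.le, Real.arctan_tan (by linarith) (by linarith)]
    ring
  · intro h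
    have h5 : α / 4 = Real.arctan (Real.sqrt (Real.sqrt 17 - 4)) := by linarith
    rw [h5, Real.tan_arctan]
    linear_combination (Real.sqrt (Real.sqrt 17 - 4) ^ 2 + Real.sqrt 17 + 4) * hq + hs
end

section
/- Let α = 4·arctan(√(√17 − 4)). For a real number x with 0 < x < π, the equation cos x = cos²x + sin²x·cos α holds if and only if x = 2·arctan(√((√17 − 3)/2)). -/
open Real

lemma cos_two_arctan_sqrt (a : ℝ) (ha : 0 ≤ a) :
    cos (2 * Real.arctan (Real.sqrt a)) = (1 - a) / (1 + a) := by
  have h : (1 + a) ≠ 0 := by positivity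
  rw [Real.cos_two_mul, Real.cos_sq_arctan, Real.sq_sqrt ha]
  field_simp
  ring

theorem stmt18 (α : ℝ) (hα : α = 4 * Real.arctan (Real.sqrt (Real.sqrt 17 - 4)))
    (x : ℝ) (h1 : 0 < x) (h2 : x < π) :
    cos x = cos x ^ 2 + sin x ^ 2 * cos α ↔
      x = 2 * Real.arctan (Real.sqrt ((Real.sqrt 17 - 3) / 2)) := by
  have hs : Real.sqrt 17 ^ 2 = 17 := Real.sq_sqrt (by norm_num)
  have h4 : 4 < Real.sqrt 17 := Real.lt_sqrt_of_sq_lt (by norm_num)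
  have hy := cos_two_arctan_sqrt ((Real.sqrt 17 - 3) / 2) (by linarith)
  have hb := cos_two_arctan_sqrt (Real.sqrt 17 - 4) (by linarith)
  have hy0 : 0 ≤ Real.arctan (Real.sqrt ((Real.sqrt 17 - 3) / 2)) :=
    Real.arctan_nonneg.2 (Real.sqrt_nonneg _)
  have hy1 := Real.arctan_lt_pi_div_two (Real.sqrt ((Real.sqrt 17 - 3) / 2))
  have ha : cos α = (5 - Real.sqrt 17) / 4 := by
    have : α = 2 * (2 * Real.arctan (Real.sqrt (Real.sqrt 17 - 4))) := by rw [hα]; ring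
    have e : (1 - (Real.sqrt 17 - 4)) / (1 + (Real.sqrt 17 - 4)) = (Real.sqrt 17 - 1) / 4 := by
      rw [div_eq_div_iff (by linarith) (by norm_num)]
      nlinarith
    rw [this, Real.cos_two_mul, hb, e]
    nlinarith
  have e : (1 - (Real.sqrt 17 - 3) / 2) / (1 + (Real.sqrt 17 - 3) / 2)
      = (Real.sqrt 17 - 3) / 4 := by
    rw [div_eq_div_iff (by linarith) (by norm_num)]
    nlinarith
  rw [e] at hy
  have hx1 : cos x < 1 := by
    have := Real.cos_lt_cos_of_nonneg_of_le_pi le_rfl h2.le h1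
    simpa using this
  rw [Real.sin_sq, ha]
  have key : cos x = (Real.sqrt 17 - 3) / 4 ↔
      x = 2 * Real.arctan (Real.sqrt ((Real.sqrt 17 - 3) / 2)) := by
    rw [← hy]
    exact Real.injOn_cos.eq_iff ⟨h1.le, h2.le⟩ ⟨by linarith, by linarith⟩
  rw [← key]
  generalize cos x = c at *
  generalize Real.sqrt 17 = s at *
  constructor
  · intro h
    have h3 : (1 - c) * (c * (s - 1) - (5 - s)) = 0 := by linear_combination 4 * h
    rcases mul_eq_zero.1 h3 with h | h
    · linarith
    · have : (s - 1) * (c - (s - 3) / 4) = 0 := by linear_combination h - hs / 4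
      rcases mul_eq_zero.1 this with h | h <;> linarith
  · rintro rfl
    have : ((s-3)/4) * (s - 1) - (5 - s) = 0 := by linear_combination hs / 4
    linear_combination (1 - (s-3)/4) / 4 * this
end
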